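/- Let K be a field with char K = 0, n ≥ 2, and G = (G^{λμ}) an invertible symmetric n×n matrix over K. Let w̃ be the 4-linear form on K^n with components W̃^{abcd} = w̃(e_a, e_b, e_c, e_d) = G^{bc}G^{da} − G^{ab}G^{cd}. Then: (1) w̃ is Q-cyclic with Q = −id, i.e. W̃^{abcd} = −W̃^{dabc} for all indices; (2) w̃ satisfies condition (i): w̃(X, X₁, X₂, X₃) = 0 for all X₁, X₂, X₃ implies X = 0; (3) w̃ satisfies condition (iii′): for any finite families (Yᵢ), (Zᵢ) in K^n, if Σᵢ w̃(Yᵢ, Zᵢ, X₁, X₂) = 0 for all X₁, X₂ ∈ K^n then Σᵢ Yᵢ ⊗ Zᵢ = 0 in K^n ⊗ K^n. -/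

import Mathlib

open Matrix
open scoped TensorProduct

/-- The pairing `g(X,Y) = Σ_{a,b} G^{ab} X_a Y_b` of a symmetric matrix `G`. -/
def gPair {K : Type*} [Field K] {n : ℕ} (G : Matrix (Fin n) (Fin n) K)
    (X Y : Fin n → K) : K :=
  ∑ a : Fin n, ∑ b : Fin n, G a b * X a * Y b

/-- The super Yang–Mills 4-linear form, with components
`W̃^{abcd} = G^{bc}G^{da} − G^{ab}G^{cd}`. -/
def symForm {K : Type*} [Field K] {n : ℕ} (G : Matrix (Fin n) (Fin n) K)
    (X₁ X₂ X₃ X₄ : Fin n → K) : K :=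
  gPair G X₂ X₃ * gPair G X₄ X₁ - gPair G X₁ X₂ * gPair G X₃ X₄

theorem gPair_eq {K : Type*} [Field K] {n : ℕ} (G : Matrix (Fin n) (Fin n) K)
    (X Y : Fin n → K) : gPair G X Y = X ⬝ᵥ G *ᵥ Y := by
  simp only [gPair, dotProduct, mulVec, Finset.mul_sum]
  exact Finset.sum_congr rfl fun a _ => Finset.sum_congr rfl fun b _ => by ring

theorem gPair_symm {K : Type*} [Field K] {n : ℕ} (G : Matrix (Fin n) (Fin n) K)
    (hsym : Gᵀ = G) (X Y : Fin n → K) : gPair G X Y = gPair G Y X := by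
  unfold gPair
  rw [Finset.sum_comm]
  refine Finset.sum_congr rfl fun a _ => Finset.sum_congr rfl fun b _ => ?_
  have : G b a = G a b := congrFun (congrFun hsym a) b
  rw [this]; ring

theorem gPair_neg_left {K : Type*} [Field K] {n : ℕ} (G : Matrix (Fin n) (Fin n) K)
    (X Y : Fin n → K) : gPair G (-X) Y = - gPair G X Y := by
  simp [gPair_eq]

theorem gPair_neg_right {K : Type*} [Field K] {n : ℕ} (G : Matrix (Fin n) (Fin n) K)
    (X Y : Fin n → K) : gPair G X (-Y) = - gPair G X Y := by
  simp [gPair_eq, mulVec_neg]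

/-- The coordinate form of condition (3) of the theorem. -/
theorem core {K : Type*} [Field K] [CharZero K] (m : ℕ)
    (G : Matrix (Fin (m + 2)) (Fin (m + 2)) K) (hsym : Gᵀ = G) (hinv : IsUnit G)
    (k : ℕ) (Y Z : Fin k → (Fin (m + 2) → K))
    (h : ∀ X₁ X₂ : Fin (m + 2) → K, ∑ i, symForm G (Y i) (Z i) X₁ X₂ = 0)
    (a b : Fin (m + 2)) : ∑ i, Y i a * Z i b = 0 := by
  have hdet : IsUnit G.det := (Matrix.isUnit_iff_isUnit_det G).1 hinv
  have hGG : G * G⁻¹ = 1 := Matrix.mul_nonsing_inv G hdet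
  have hd : ∀ (X : Fin (m + 2) → K) (b : Fin (m + 2)),
      gPair G X (G⁻¹ *ᵥ Pi.single b 1) = X b := by
    intro X b
    rw [gPair_eq, mulVec_mulVec, hGG, one_mulVec, dotProduct_single, mul_one]
  set c : K := ∑ i, gPair G (Y i) (Z i) with hc
  have key : ∀ a b, ∑ i, Y i a * Z i b = c * G⁻¹ b a := by
    intro a b
    have h1 := h (G⁻¹ *ᵥ Pi.single b 1) (G⁻¹ *ᵥ Pi.single a 1)
    have e : (G⁻¹ *ᵥ Pi.single b 1) a = G⁻¹ a b := by simp
    have e2 : G⁻¹ a b = G⁻¹ b a := by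
      have : (G⁻¹)ᵀ = G⁻¹ := by rw [Matrix.transpose_nonsing_inv, hsym]
      exact congrFun (congrFun this b) a
    simp only [symForm] at h1
    rw [Finset.sum_sub_distrib, ← Finset.sum_mul, ← hc, hd, e, e2, sub_eq_zero] at h1
    rw [← h1]
    refine Finset.sum_congr rfl fun i _ => ?_
    rw [gPair_symm G hsym _ (Y i), hd, hd, mul_comm]
  have hcc : c = c * ((m + 2 : ℕ) : K) := by
    calc c = ∑ a, ∑ b, G a b * ∑ i, Y i a * Z i b := by
          rw [hc]
          simp only [gPair]
          rw [Finset.sum_comm]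
          refine Finset.sum_congr rfl fun a _ => ?_
          rw [Finset.sum_comm]
          refine Finset.sum_congr rfl fun b _ => ?_
          rw [Finset.mul_sum]
          exact Finset.sum_congr rfl fun i _ => by ring
      _ = c * ∑ a, (G * G⁻¹) a a := by
          rw [Finset.mul_sum]
          refine Finset.sum_congr rfl fun a _ => ?_
          rw [Matrix.mul_apply, Finset.mul_sum]
          exact Finset.sum_congr rfl fun b _ => by rw [key]; ring
      _ = _ := by rw [hGG]; simp
  have hc0 : c = 0 := by
    have h2 : c * ((m + 1 : ℕ) : K) = 0 := by
      push_cast at hcc ⊢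
      linear_combination -hcc
    rcases mul_eq_zero.1 h2 with h3 | h3
    · exact h3
    · exact absurd h3 (Nat.cast_ne_zero.2 (Nat.succ_ne_zero m))
  rw [key, hc0, zero_mul]

/-- over a field of characteristic zero, for `G` an invertible symmetric
`n×n` matrix (`n = m + 2 ≥ 2`), the super Yang–Mills 4-linear form `w̃` satisfies:
(1) it is `Q`-cyclic with `Q = −id`, i.e. `w̃(X₁,X₂,X₃,X₄) = −w̃(X₄,X₁,X₂,X₃)`;
(2) condition (i): `w̃(X,·,·,·) = 0` identically implies `X = 0`;
(3) condition (iii′): `Σᵢ w̃(Yᵢ, Zᵢ, X₁, X₂) = 0` for all `X₁, X₂` implies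
`Σᵢ Yᵢ ⊗ Zᵢ = 0`. -/
theorem stmt_15 (K : Type*) [Field K] [CharZero K] (m : ℕ)
    (G : Matrix (Fin (m + 2)) (Fin (m + 2)) K) (hsym : Gᵀ = G) (hinv : IsUnit G) :
    (∀ X₁ X₂ X₃ X₄ : Fin (m + 2) → K,
      symForm G X₁ X₂ X₃ X₄ = symForm G (-X₄) X₁ X₂ X₃ ∧
      symForm G X₁ X₂ X₃ X₄ = -symForm G X₄ X₁ X₂ X₃) ∧
    (∀ X : Fin (m + 2) → K,
      (∀ X₁ X₂ X₃ : Fin (m + 2) → K, symForm G X X₁ X₂ X₃ = 0) → X = 0) ∧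
    (∀ (k : ℕ) (Y Z : Fin k → (Fin (m + 2) → K)),
      (∀ X₁ X₂ : Fin (m + 2) → K, ∑ i, symForm G (Y i) (Z i) X₁ X₂ = 0) →
      ∑ i, (Y i) ⊗ₜ[K] (Z i) =
        (0 : TensorProduct K (Fin (m + 2) → K) (Fin (m + 2) → K))) := by
  refine ⟨fun X₁ X₂ X₃ X₄ => ?_, fun X hX => ?_, fun k Y Z h => ?_⟩
  · simp only [symForm, gPair_neg_left, gPair_neg_right]
    constructor <;> rw [gPair_symm G hsym X₃ X₄, gPair_symm G hsym X₄ X₃] <;> ring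
  · funext a
    have := core m G hsym hinv 1 (fun _ => X) (fun _ => Pi.single 0 1)
      (fun X₁ X₂ => by simp [hX]) a 0
    simpa using this
  · have hb := core m G hsym hinv k Y Z h
    apply ((Pi.basisFun K (Fin (m + 2))).tensorProduct (Pi.basisFun K (Fin (m + 2)))).repr.injective
    ext ⟨a, b⟩
    simpa [map_sum, Finsupp.finsetSum_apply, mul_comm] using hb a b
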